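/- Let d = (d_1, …, d_n) be a graphical degree sequence with d_min ≥ 1 and 3 ≤ d_max ≤ (1/3)·√M, and let Z ∈ Ω(d). Then for every pair (p,q) with p + q = 4, p ∈ {1,2} and q ∈ {2,3}, one has |C(p,q)| ≤ 2·d_max^2·M·|C(p−1, q−1)|, where C(p,q) is the set of good encodings consistent with Z having exactly p 2-defect edges and exactly q (−1)-defect edges. -/

import Mathlib

/-!
Write `D = d_max`. The bound is a double count of switchings that turn an encoding in `C(p, q)` into
one in `C(p − 1, q − 1)` by removing a 2-defect edge `ab` and a (−1)-defect edge `bc`.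

When all four defects are present, each of the five configurations contains a vertex `b` on exactly
two (−1)-defect edges and on a 2-defect edge `ab`, so there are two choices of `c`. Goodness gives
`c` at least two neighbours `x` along edges labelled 1. If `ax` has label 0, one can alternately
lower and raise the labels along the closed walk `a b c x`. Otherwise one uses a longer closed walk
`a b c x y z` with `yz` labelled 1 and `xy`, `za` labelled 0, and there are at least
`K = M − (2D² + 7D + 10)` such pairs `(y, z)`. Short walks get weight `K` and long ones weight 1, so
every encoding in `C(p, q)` has total forward weight at least `2 · 2 · K`. No new defect is created,
so the result stays good and consistent with `Z`.

A switching can be undone once its walk is known. In the result `b` lies on exactly one (−1)-defect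
edge, so it is one of at most four vertices, `a` is one of at most `D + 1` neighbours of `b`, and
`c` is free. Given these there are at most `D` short walks and at most `D (D + 1)²` long ones. Hence
`4 K |C(p, q)| ≤ 4 n (D + 1) D (K + (D + 1)²) |C(p − 1, q − 1)|`. As `M ≥ 9 D²` yields
`K ≥ 7 D² − 7 D − 10`, one has `(D + 1) (K + (D + 1)²) ≤ 2 D K`, and `n ≤ M` finishes the proof.
-/

open scoped Classical

noncomputable section

namespace SwitchChain

variable {n : ℕ}

/-- `Omega d` is the set of simple graphs on `[n] = Fin n` with degree sequence `d`. -/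
def Omega (d : Fin n → ℕ) : Set (SimpleGraph (Fin n)) :=
  {G | ∀ v, {w | G.Adj v w}.ncard = d v}

/-- `M d` is the sum of the degrees. -/
def M (d : Fin n → ℕ) : ℕ := ∑ j, d j

/-- The maximum degree. -/
def dmax (d : Fin n → ℕ) : ℕ := Finset.univ.sup d

/-- An encoding for the degree sequence `d`: a symmetric integer matrix with zero
diagonal, entries in `{-1, 0, 1, 2}`, and row sums `d`. -/
def IsEncoding (d : Fin n → ℕ) (L : Matrix (Fin n) (Fin n) ℤ) : Prop :=
  (∀ i j, L i j = L j i) ∧ (∀ i, L i i = 0) ∧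
  (∀ i j, L i j = -1 ∨ L i j = 0 ∨ L i j = 1 ∨ L i j = 2) ∧
  (∀ i, ∑ j, L i j = (d i : ℤ))

/-- The set of (unordered) edges of `L` carrying the label `c`. -/
def labelEdges (L : Matrix (Fin n) (Fin n) ℤ) (c : ℤ) : Set (Sym2 (Fin n)) :=
  {e | ∃ x y : Fin n, e = s(x, y) ∧ x ≠ y ∧ L x y = c}

/-- Every defect edge of `L` occurs, with its label, in the labelled edge set `D`. -/
def DefectsWithin (L : Matrix (Fin n) (Fin n) ℤ) (D : Set (Sym2 (Fin n) × ℤ)) : Prop :=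
  ∀ x y : Fin n, x ≠ y → (L x y = 2 ∨ L x y = -1) → (s(x, y), L x y) ∈ D

/-- A valid encoding: at most four defect edges, forming a labelled subgraph of one
of the five possible configurations. -/
def ValidEncoding (d : Fin n → ℕ) (L : Matrix (Fin n) (Fin n) ℤ) : Prop :=
  IsEncoding d L ∧
  (labelEdges L 2).ncard + (labelEdges L (-1)).ncard ≤ 4 ∧
  ∃ (a b c u e f : Fin n) (ℓ : ℤ), (ℓ = -1 ∨ ℓ = 2) ∧
    (([a, b, c, u].Pairwise (· ≠ ·) ∧ e ≠ f ∧
        e ∉ ({a, b, c, u} : Set (Fin n)) ∧ f ∉ ({a, b, c, u} : Set (Fin n)) ∧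
        DefectsWithin L {(s(a, b), 2), (s(b, c), -1), (s(b, u), -1), (s(e, f), ℓ)}) ∨
     ([a, b, c, u, e].Pairwise (· ≠ ·) ∧
        DefectsWithin L {(s(a, b), 2), (s(b, c), -1), (s(b, u), -1), (s(u, e), ℓ)}) ∨
     ([a, b, c, u, e].Pairwise (· ≠ ·) ∧
        DefectsWithin L {(s(a, b), -1), (s(b, c), -1), (s(b, u), 2), (s(u, e), ℓ)}) ∨
     ([a, b, c, u].Pairwise (· ≠ ·) ∧
        DefectsWithin L {(s(a, b), -1), (s(b, c), -1), (s(b, u), 2), (s(u, c), ℓ)}) ∨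
     ([a, b, c, u].Pairwise (· ≠ ·) ∧
        DefectsWithin L {(s(a, b), 2), (s(b, c), -1), (s(b, u), -1), (s(u, c), ℓ)}))

/-- A good encoding: a valid encoding satisfying the degree conditions of
Lemma 2.3. -/
def GoodEncoding (d : Fin n → ℕ) (L : Matrix (Fin n) (Fin n) ℤ) : Prop :=
  ValidEncoding d L ∧
  (∀ x y : Fin n, x ≠ y → L x y = 2 → 2 ≤ d x ∧ 2 ≤ d y) ∧
  (∀ x y z : Fin n, x ≠ y → y ≠ z → x ≠ z → L x y = 2 → L y z = 2 → 4 ≤ d y) ∧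
  (∀ x y z : Fin n, x ≠ y → y ≠ z → x ≠ z → L x y = 2 → L y z = -1 → 3 ≤ d y)

/-- The 0-1 adjacency matrix of a simple graph, over `ℤ`. -/
def adjMat (Z : SimpleGraph (Fin n)) : Matrix (Fin n) (Fin n) ℤ :=
  fun i j => if Z.Adj i j then 1 else 0

/-- `L` is consistent with `Z` if every entry of `L + Z` lies in `{0, 1, 2}`. -/
def ConsistentWith (L : Matrix (Fin n) (Fin n) ℤ) (Z : SimpleGraph (Fin n)) : Prop :=
  ∀ i j, L i j + adjMat Z i j = 0 ∨ L i j + adjMat Z i j = 1 ∨ L i j + adjMat Z i j = 2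


/-- `C(p,q)`: the set of good encodings consistent with `Z` having exactly `p`
2-defect edges and exactly `q` (−1)-defect edges. -/
def Cset (d : Fin n → ℕ) (Z : SimpleGraph (Fin n)) (p q : ℕ) :
    Set (Matrix (Fin n) (Fin n) ℤ) :=
  {L | GoodEncoding d L ∧ ConsistentWith L Z ∧
    (labelEdges L 2).ncard = p ∧ (labelEdges L (-1)).ncard = q}

section Graph

open Finset

variable {V : Type*} [Fintype V] (G : SimpleGraph V) [DecidableRel G.Adj]

lemma degree_add_card_le_card_edgeFinset {v : V} {F : Finset (Sym2 V)} (hF : F ⊆ G.edgeFinset)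
    (hv : ∀ e ∈ F, v ∉ e) : G.degree v + #F ≤ #G.edgeFinset := by
  have hdisj : Disjoint (G.incidenceFinset v) F :=
    disjoint_left.2 fun e he heF => hv e heF (G.mem_incidenceFinset v e |>.1 he).2
  rw [← G.card_incidenceFinset_eq_degree, ← card_union_of_disjoint hdisj]
  exact card_le_card (union_subset (G.incidenceFinset_subset v) hF)

variable {G} in
lemma degree_lt_card_edgeFinset {v : V} {e : Sym2 V} (he : e ∈ G.edgeFinset) (hv : v ∉ e) :
    G.degree v < #G.edgeFinset := by
  simpa using degree_add_card_le_card_edgeFinset G (singleton_subset_iff.2 he) (by simpa using hv)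

lemma degree_add_degree_le_card_edgeFinset {u v : V} (huv : u ≠ v) (hadj : ¬G.Adj u v) :
    G.degree u + G.degree v ≤ #G.edgeFinset := by
  rw [← G.card_incidenceFinset_eq_degree v]
  refine degree_add_card_le_card_edgeFinset G (G.incidenceFinset_subset v) fun e he hu => ?_
  obtain ⟨heG, hev⟩ := (G.mem_incidenceFinset v e).1 he
  rw [(Sym2.mem_and_mem_iff huv).1 ⟨hu, hev⟩] at heG
  exact hadj heG

lemma card_interedges_univ (S : Finset V) : #(G.interedges S univ) = ∑ v ∈ S, G.degree v := by
  rw [SimpleGraph.interedges_def, card_filter, sum_product]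
  simp only [← card_filter, ← G.card_neighborFinset_eq_degree, G.neighborFinset_eq_filter]

lemma sum_degrees_le_card_interedges_add [DecidableEq V] (A B : Finset V) :
    ∑ v, G.degree v ≤ #(G.interedges A B) + ∑ v ∈ Aᶜ, G.degree v + ∑ v ∈ Bᶜ, G.degree v := by
  have hcover : G.interedges univ univ ⊆
      G.interedges A B ∪ G.interedges Aᶜ univ ∪ G.interedges univ Bᶜ := by
    rintro ⟨u, v⟩ huv
    simp only [mem_union, SimpleGraph.mk_mem_interedges_iff, mem_univ, true_and, mem_compl]
      at huv ⊢
    tauto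
  have hswap : #(G.interedges univ Bᶜ) = #(G.interedges Bᶜ univ) :=
    have := G.symm
    Rel.card_interedges_comm _ _
  calc ∑ v, G.degree v = #(G.interedges univ univ) := (card_interedges_univ G univ).symm
    _ ≤ #(G.interedges A B) + #(G.interedges Aᶜ univ) + #(G.interedges univ Bᶜ) :=
      (card_le_card hcover).trans <| (card_union_le _ _).trans <|
        Nat.add_le_add_right (card_union_le _ _) _
    _ = _ := by rw [hswap, card_interedges_univ, card_interedges_univ]

end Graph

section LabelGraph

open Finset

variable {d : Fin n → ℕ} {L : Matrix (Fin n) (Fin n) ℤ} {l m : ℤ} {a b c u v x y : Fin n}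

/-- The graph formed by the edges of `L` labelled `l`; for `l = 0` these are the non-edges of the
edge-labelled graph `L`. -/
def labelGraph (L : Matrix (Fin n) (Fin n) ℤ) (l : ℤ) : SimpleGraph (Fin n) :=
  SimpleGraph.fromEdgeSet (labelEdges L l)

lemma edgeSet_labelGraph : (labelGraph L l).edgeSet = labelEdges L l := by
  rw [labelGraph, SimpleGraph.edgeSet_fromEdgeSet, sdiff_eq_left, Set.disjoint_left]
  rintro _ ⟨x, y, rfl, hxy, -⟩
  simpa using hxy

lemma labelGraph_adj_iff_mem : (labelGraph L l).Adj x y ↔ s(x, y) ∈ labelEdges L l := by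
  rw [← edgeSet_labelGraph, SimpleGraph.mem_edgeSet]

lemma card_edgeFinset_labelGraph : #(labelGraph L l).edgeFinset = (labelEdges L l).ncard := by
  rw [← edgeSet_labelGraph, ← SimpleGraph.coe_edgeFinset, Set.ncard_coe_finset]

lemma degree_labelGraph_le_ncard : (labelGraph L l).degree v ≤ (labelEdges L l).ncard := by
  rw [← card_edgeFinset_labelGraph]
  exact (labelGraph L l).degree_le_card_edgeFinset v

lemma sum_degree_labelGraph :
    ∑ v, (labelGraph L l).degree v = 2 * (labelEdges L l).ncard := by
  rw [SimpleGraph.sum_degrees_eq_twice_card_edges, card_edgeFinset_labelGraph]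

lemma degree_labelGraph_lt_ncard (hxy : (labelGraph L l).Adj x y) (hx : v ≠ x) (hy : v ≠ y) :
    (labelGraph L l).degree v < (labelEdges L l).ncard := by
  rw [← card_edgeFinset_labelGraph]
  exact degree_lt_card_edgeFinset (e := s(x, y)) (SimpleGraph.mem_edgeFinset.2 hxy)
    (by simp [hx, hy])

lemma degree_labelGraph_add_le_ncard (huv : u ≠ v) (hadj : ¬(labelGraph L l).Adj u v) :
    (labelGraph L l).degree u + (labelGraph L l).degree v ≤ (labelEdges L l).ncard := by
  rw [← card_edgeFinset_labelGraph]
  exact degree_add_degree_le_card_edgeFinset _ huv hadj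

lemma mem_labelEdges_iff (hL : L.IsSymm) : s(x, y) ∈ labelEdges L l ↔ x ≠ y ∧ L x y = l := by
  constructor
  · rintro ⟨u, v, huv, hne, hl⟩
    rcases Sym2.eq_iff.1 huv with ⟨rfl, rfl⟩ | ⟨rfl, rfl⟩
    · exact ⟨hne, hl⟩
    · exact ⟨hne.symm, by rw [hL.apply, hl]⟩
  · rintro ⟨hne, hl⟩
    exact ⟨x, y, rfl, hne, hl⟩

lemma labelGraph_adj_iff (hL : L.IsSymm) : (labelGraph L l).Adj x y ↔ x ≠ y ∧ L x y = l := by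
  rw [labelGraph_adj_iff_mem, mem_labelEdges_iff hL]

lemma disjoint_labelEdges (hL : L.IsSymm) (hlm : l ≠ m) :
    Disjoint (labelEdges L l) (labelEdges L m) := by
  rw [Set.disjoint_left]
  rintro _ ⟨x, y, rfl, -, rfl⟩ hm
  exact hlm ((mem_labelEdges_iff hL).1 hm).2

lemma label_unique (hL : L.IsSymm) (hl : (labelGraph L l).Adj x y)
    (hm : (labelGraph L m).Adj x y) : l = m :=
  ((labelGraph_adj_iff hL).1 hl).2.symm.trans ((labelGraph_adj_iff hL).1 hm).2

namespace IsEncoding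

lemma isSymm (hE : IsEncoding d L) : L.IsSymm := Matrix.IsSymm.ext fun i j => hE.1 j i

lemma adj_one_or_two_or_neg_one (hE : IsEncoding d L) (hxy : x ≠ y)
    (h0 : ¬(labelGraph L 0).Adj x y) :
    (labelGraph L 1).Adj x y ∨ (labelGraph L 2).Adj x y ∨ (labelGraph L (-1)).Adj x y := by
  simp only [labelGraph_adj_iff hE.isSymm] at h0 ⊢
  have := hE.2.2.1 x y
  tauto

lemma apply_eq_sum_indicators (hE : IsEncoding d L) (v w : Fin n) :
    L v w = (if (labelGraph L 1).Adj v w then 1 else 0) +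
      2 * (if (labelGraph L 2).Adj v w then 1 else 0) -
      (if (labelGraph L (-1)).Adj v w then 1 else 0) := by
  rcases eq_or_ne v w with rfl | hvw
  · simp [hE.2.1]
  · simp only [labelGraph_adj_iff hE.isSymm, hvw, ne_eq, not_false_eq_true, true_and]
    rcases hE.2.2.1 v w with h | h | h | h <;> simp [h]

lemma degree_one_add_two_mul_degree_two (hE : IsEncoding d L) (v : Fin n) :
    (labelGraph L 1).degree v + 2 * (labelGraph L 2).degree v =
      d v + (labelGraph L (-1)).degree v := by
  have hrow := hE.2.2.2 v
  simp only [hE.apply_eq_sum_indicators, sum_sub_distrib, sum_add_distrib, ← mul_sum,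
    sum_boole, ← SimpleGraph.neighborFinset_eq_filter,
    SimpleGraph.card_neighborFinset_eq_degree] at hrow
  lia

lemma card_compl_neighborFinset_zero_add_le (hE : IsEncoding d L) (v : Fin n) :
    #((labelGraph L 0).neighborFinset v)ᶜ + (labelGraph L 2).degree v ≤
      1 + d v + 2 * (labelGraph L (-1)).degree v := by
  have hcover : ((labelGraph L 0).neighborFinset v)ᶜ ⊆
      {v} ∪ (labelGraph L 1).neighborFinset v ∪ (labelGraph L 2).neighborFinset v ∪
        (labelGraph L (-1)).neighborFinset v := by
    intro w hw
    simp only [mem_compl, mem_union, mem_singleton, SimpleGraph.mem_neighborFinset] at hw ⊢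
    rcases eq_or_ne w v with hwv | hwv
    · simp [hwv]
    · have := hE.adj_one_or_two_or_neg_one hwv.symm hw
      tauto
  have hcard := (card_le_card hcover).trans ((card_union_le _ _).trans
    (Nat.add_le_add_right ((card_union_le _ _).trans
      (Nat.add_le_add_right (card_union_le _ _) _)) _))
  simp only [card_singleton, SimpleGraph.card_neighborFinset_eq_degree] at hcard
  have hrow := hE.degree_one_add_two_mul_degree_two v
  lia

lemma sum_degree_one (hE : IsEncoding d L) :
    ∑ v, (labelGraph L 1).degree v + 4 * (labelEdges L 2).ncard =
      M d + 2 * (labelEdges L (-1)).ncard := by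
  have hsum := Fintype.sum_congr _ _ hE.degree_one_add_two_mul_degree_two
  simp only [sum_add_distrib, ← mul_sum] at hsum
  have hneg := sum_degree_labelGraph (L := L) (l := -1)
  have htwo := sum_degree_labelGraph (L := L) (l := 2)
  rw [M]
  lia

end IsEncoding

lemma le_dmax (d : Fin n → ℕ) (v : Fin n) : d v ≤ dmax d := le_sup (mem_univ v)

namespace IsEncoding

lemma degree_one_le (hE : IsEncoding d L) (v : Fin n) :
    (labelGraph L 1).degree v ≤ dmax d + (labelGraph L (-1)).degree v := by
  have hrow := hE.degree_one_add_two_mul_degree_two v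
  have hd := le_dmax d v
  lia

lemma sum_degree_one_le (hE : IsEncoding d L) (S : Finset (Fin n)) :
    ∑ v ∈ S, (labelGraph L 1).degree v ≤ #S * dmax d + 2 * (labelEdges L (-1)).ncard :=
  calc ∑ v ∈ S, (labelGraph L 1).degree v
      ≤ ∑ v ∈ S, (dmax d + (labelGraph L (-1)).degree v) := sum_le_sum fun v _ => hE.degree_one_le v
    _ ≤ #S * dmax d + ∑ v, (labelGraph L (-1)).degree v := by
      rw [sum_add_distrib, sum_const, smul_eq_mul]
      gcongr
      exact subset_univ S
    _ = _ := by rw [sum_degree_labelGraph]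

end IsEncoding

end LabelGraph

section Corners

open Finset

variable {d : Fin n → ℕ} {L : Matrix (Fin n) (Fin n) ℤ} {a b c x y z : Fin n}

/-- The triple `(a, b, c)` is a corner of `L` if `ab` is a 2-defect edge and `bc` is one of exactly
two (−1)-defect edges at `b`. Switchings remove the pair of defects `ab`, `bc`. -/
def IsCorner (L : Matrix (Fin n) (Fin n) ℤ) (a b c : Fin n) : Prop :=
  (labelGraph L 2).Adj a b ∧ (labelGraph L (-1)).Adj b c ∧ (labelGraph L (-1)).degree b = 2

lemma ValidEncoding.exists_star (hV : ValidEncoding d L) :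
    ∃ (a b c u : Fin n) (t : Sym2 (Fin n) × ℤ), c ≠ u ∧ b ∉ t.1 ∧
      DefectsWithin L {(s(a, b), 2), (s(b, c), -1), (s(b, u), -1), t} := by
  have hrotate : ∀ {a b c u : Fin n} {t : Sym2 (Fin n) × ℤ},
      DefectsWithin L {(s(a, b), -1), (s(b, c), -1), (s(b, u), 2), t} →
      DefectsWithin L {(s(u, b), 2), (s(b, a), -1), (s(b, c), -1), t} := by
    intro a b c u t hD
    rwa [Sym2.eq_swap (a := u), Sym2.eq_swap (a := b) (b := a),
      Set.insert_comm _ (s(a, b), -1), Set.insert_comm _ (s(b, c), -1)]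
  obtain ⟨-, -, a, b, c, u, e, f, ℓ, -, hconf⟩ := hV
  simp only [List.pairwise_cons, List.mem_cons, List.not_mem_nil, forall_eq_or_imp, or_false,
    Set.mem_insert_iff, Set.mem_singleton_iff, not_or] at hconf
  rcases hconf with ⟨hne, -, he, hf, hD⟩ | ⟨hne, hD⟩ | ⟨hne, hD⟩ | ⟨hne, hD⟩ | ⟨hne, hD⟩
  · exact ⟨a, b, c, u, _, by tauto, by rw [Sym2.mem_iff]; tauto, hD⟩
  · exact ⟨a, b, c, u, _, by tauto, by rw [Sym2.mem_iff]; tauto, hD⟩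
  · exact ⟨u, b, a, c, _, by tauto, by rw [Sym2.mem_iff]; tauto, hrotate hD⟩
  · exact ⟨u, b, a, c, _, by tauto, by rw [Sym2.mem_iff]; tauto, hrotate hD⟩
  · exact ⟨a, b, c, u, _, by tauto, by rw [Sym2.mem_iff]; tauto, hD⟩

lemma DefectsWithin.mem_labelEdges {D : Finset (Sym2 (Fin n) × ℤ)}
    (hD : DefectsWithin L (D : Set (Sym2 (Fin n) × ℤ)))
    (hcard : #D ≤ (labelEdges L 2).ncard + (labelEdges L (-1)).ncard) {t : Sym2 (Fin n) × ℤ}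
    (ht : t ∈ D) : t.1 ∈ labelEdges L t.2 := by
  set T : Set (Sym2 (Fin n) × ℤ) :=
    (·, 2) '' labelEdges L 2 ∪ (·, -1) '' labelEdges L (-1) with hT
  have hTD : T ⊆ (D : Set (Sym2 (Fin n) × ℤ)) := by
    rintro _ (⟨_, ⟨x, y, rfl, hxy, hl⟩, rfl⟩ | ⟨_, ⟨x, y, rfl, hxy, hl⟩, rfl⟩)
    · exact hl ▸ hD x y hxy (.inl hl)
    · exact hl ▸ hD x y hxy (.inr hl)
  have hdisj : Disjoint ((·, (2 : ℤ)) '' labelEdges L 2) ((·, -1) '' labelEdges L (-1)) := by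
    rw [Set.disjoint_left]
    rintro _ ⟨_, -, rfl⟩ ⟨_, -, h⟩
    simp at h
  have hTcard : (D : Set (Sym2 (Fin n) × ℤ)).ncard ≤ T.ncard := by
    rw [hT, Set.ncard_union_eq hdisj, Set.ncard_image_of_injective _ (Prod.mk_left_injective _),
      Set.ncard_image_of_injective _ (Prod.mk_left_injective _), Set.ncard_coe_finset]
    exact hcard
  have htT : t ∈ T := Set.eq_of_subset_of_ncard_le hTD hTcard ▸ mem_coe.2 ht
  rcases htT with ⟨e, he, rfl⟩ | ⟨e, he, rfl⟩ <;> exact he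

lemma ValidEncoding.exists_corners (hV : ValidEncoding d L)
    (hfour : (labelEdges L 2).ncard + (labelEdges L (-1)).ncard = 4) :
    ∃ a b c c', c ≠ c' ∧ IsCorner L a b c ∧ IsCorner L a b c' := by
  have hL := hV.1.isSymm
  obtain ⟨a, b, c, u, t, hcu, hbt, hD⟩ := hV.exists_star
  have hmem : ∀ s ∈ ({(s(a, b), 2), (s(b, c), -1), (s(b, u), -1), t} : Finset (Sym2 (Fin n) × ℤ)),
      s.1 ∈ labelEdges L s.2 := fun s hs =>
    DefectsWithin.mem_labelEdges (by simpa using hD) (card_le_four.trans hfour.ge) hs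
  simp only [Finset.mem_insert, forall_eq_or_imp, ← labelGraph_adj_iff_mem] at hmem
  obtain ⟨hab, hbc, hbu, -⟩ := hmem
  have hdeg : (labelGraph L (-1)).degree b = 2 := by
    rw [← SimpleGraph.card_neighborFinset_eq_degree, ← card_pair hcu]
    congr 1
    ext w
    rw [SimpleGraph.mem_neighborFinset, mem_insert, mem_singleton]
    refine ⟨fun hbw => ?_, by rintro (rfl | rfl) <;> assumption⟩
    obtain ⟨hne, hl⟩ := (labelGraph_adj_iff hL).1 hbw
    rcases hD b w hne (.inr hl) with h | h | h | h
    · simp [hl] at h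
    · exact .inl (Sym2.congr_right.1 (congrArg Prod.fst h))
    · exact .inr (Sym2.congr_right.1 (congrArg Prod.fst h))
    · exact absurd (congrArg Prod.fst h ▸ Sym2.mem_mk_left b w) hbt
  exact ⟨a, b, c, u, hcu, ⟨hab, hbc, hdeg⟩, ⟨hab, hbu, hdeg⟩⟩

lemma GoodEncoding.three_le (hG : GoodEncoding d L) (hxy : (labelGraph L 2).Adj x y)
    (hyz : (labelGraph L (-1)).Adj y z) : 3 ≤ d y := by
  have hL := hG.1.1.isSymm
  have hxz : x ≠ z := by
    rintro rfl
    simpa using label_unique hL hxy hyz.symm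
  rw [labelGraph_adj_iff hL] at hxy hyz
  exact hG.2.2.2 x y z hxy.1 hyz.1 hxz hxy.2 hyz.2

namespace IsCorner

lemma ne_ends (hc : IsCorner L a b c) (hL : L.IsSymm) : a ≠ c := by
  rintro rfl
  simpa using label_unique hL hc.1 hc.2.1.symm

lemma one_le_ncard_two (hc : IsCorner L a b c) : 1 ≤ (labelEdges L 2).ncard :=
  ((labelGraph L 2).degree_pos_iff_exists_adj a |>.2 ⟨b, hc.1⟩).trans_le degree_labelGraph_le_ncard

lemma two_le_ncard_neg_one (hc : IsCorner L a b c) : 2 ≤ (labelEdges L (-1)).ncard :=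
  hc.2.2.ge.trans degree_labelGraph_le_ncard

lemma degree_neg_one_add_two_le (hc : IsCorner L a b c) (hL : L.IsSymm) :
    (labelGraph L (-1)).degree a + 2 ≤ (labelEdges L (-1)).ncard := by
  have hnadj : ¬(labelGraph L (-1)).Adj a b := fun h => by simpa using label_unique hL hc.1 h
  simpa only [hc.2.2] using degree_labelGraph_add_le_ncard hc.1.ne hnadj

lemma three_le_dmax (hc : IsCorner L a b c) (hG : GoodEncoding d L) : 3 ≤ dmax d :=
  (hG.three_le hc.1 hc.2.1).trans (le_dmax d b)

lemma two_le_degree_one (hc : IsCorner L a b c) (hG : GoodEncoding d L) (hdc : 1 ≤ d c)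
    (htwo : (labelEdges L 2).ncard ≤ 2) : 2 ≤ (labelGraph L 1).degree c := by
  have hE := hG.1.1
  have hrow := hE.degree_one_add_two_mul_degree_two c
  have hneg : 0 < (labelGraph L (-1)).degree c :=
    (SimpleGraph.degree_pos_iff_exists_adj _ c).2 ⟨b, hc.2.1.symm⟩
  have hlt : (labelGraph L 2).degree c < (labelEdges L 2).ncard :=
    degree_labelGraph_lt_ncard hc.1 (hc.ne_ends hE.isSymm).symm hc.2.1.ne'
  rcases Nat.eq_zero_or_pos ((labelGraph L 2).degree c) with h0 | hpos
  · lia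
  · obtain ⟨e, hce⟩ := (SimpleGraph.degree_pos_iff_exists_adj _ c).1 hpos
    have := hG.three_le hce.symm hc.2.1.symm
    lia

end IsCorner

end Corners

section Switching

open Finset

variable {d : Fin n → ℕ} {L : Matrix (Fin n) (Fin n) ℤ} {e f g : Sym2 (Fin n)}
  {S R : Finset (Sym2 (Fin n))} {p q : ℕ} {Z : SimpleGraph (Fin n)} {b c i j : Fin n}

/-- The matrix obtained from `L` by lowering by one the label of every edge in `S` and raising by
one the label of every edge in `R`. -/
def switch (L : Matrix (Fin n) (Fin n) ℤ) (S R : Finset (Sym2 (Fin n))) :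
    Matrix (Fin n) (Fin n) ℤ :=
  fun i j => L i j - (if s(i, j) ∈ S then 1 else 0) + if s(i, j) ∈ R then 1 else 0

lemma switch_injective (S R : Finset (Sym2 (Fin n))) :
    Function.Injective fun L => switch L S R := by
  intro L L' h
  ext i j
  simpa [switch] using congrFun (congrFun h i) j

lemma card_filter_mk_mem (T : Finset (Sym2 (Fin n))) (i : Fin n) :
    #{j | s(i, j) ∈ T} = #{g ∈ T | i ∈ g} := by
  have himage : {g ∈ T | i ∈ g} = image (s(i, ·)) {j | s(i, j) ∈ T} := by
    ext g
    simp only [mem_filter, mem_image, mem_univ, true_and]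
    constructor
    · rintro ⟨hg, j, rfl⟩
      exact ⟨j, hg, rfl⟩
    · rintro ⟨j, hj, rfl⟩
      exact ⟨hj, Sym2.mem_mk_left i j⟩
  rw [himage, card_image_of_injective _ fun j j' h => Sym2.congr_right.1 h]

lemma sum_switch (i : Fin n) :
    ∑ j, switch L S R i j = ∑ j, L i j - #{g ∈ S | i ∈ g} + #{g ∈ R | i ∈ g} := by
  simp only [switch, sum_add_distrib, sum_sub_distrib, sum_boole, card_filter_mk_mem]

/-- Lowering `e` and the edges of `S` and raising `f` and the edges of `R` removes the 2-defect `e`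
and the (−1)-defect `f` from `L`, creates no new defect, and preserves the row sums. -/
structure IsReducing (L : Matrix (Fin n) (Fin n) ℤ) (e f : Sym2 (Fin n))
    (S R : Finset (Sym2 (Fin n))) : Prop where
  mem_two : e ∈ labelEdges L 2
  mem_neg_one : f ∈ labelEdges L (-1)
  subset_one : ∀ g ∈ S, g ∈ labelEdges L 1
  subset_zero : ∀ g ∈ R, g ∈ labelEdges L 0
  balanced : ∀ v, #{g ∈ insert e S | v ∈ g} = #{g ∈ insert f R | v ∈ g}

namespace IsReducing

lemma label_eq (h : IsReducing L e f S R) (hL : L.IsSymm) (i j : Fin n) :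
    (s(i, j) = e → L i j = 2) ∧ (s(i, j) = f → L i j = -1) ∧ (s(i, j) ∈ S → L i j = 1) ∧
      (s(i, j) ∈ R → L i j = 0) := by
  have hlabel : ∀ {l}, s(i, j) ∈ labelEdges L l → L i j = l :=
    fun hl => ((mem_labelEdges_iff hL).1 hl).2
  exact ⟨fun hg => hlabel (hg ▸ h.mem_two), fun hg => hlabel (hg ▸ h.mem_neg_one),
    fun hg => hlabel (h.subset_one _ hg), fun hg => hlabel (h.subset_zero _ hg)⟩

lemma switch_apply (h : IsReducing L e f S R) (hL : L.IsSymm) (i j : Fin n) :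
    switch L (insert e S) (insert f R) i j =
      if s(i, j) = e ∨ s(i, j) ∈ R then 1 else if s(i, j) = f ∨ s(i, j) ∈ S then 0 else L i j := by
  have hlabel := h.label_eq hL i j
  simp only [switch, mem_insert]
  grind

lemma switch_apply_of_notMem (h : IsReducing L e f S R) (hL : L.IsSymm)
    (hS : s(i, j) ∉ insert e S) (hR : s(i, j) ∉ insert f R) :
    switch L (insert e S) (insert f R) i j = L i j := by
  simp only [mem_insert, not_or] at hS hR
  simp [h.switch_apply hL, hS, hR]

lemma isEncoding (h : IsReducing L e f S R) (hE : IsEncoding d L) :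
    IsEncoding d (switch L (insert e S) (insert f R)) := by
  have hval := h.switch_apply hE.isSymm
  refine ⟨fun i j => ?_, fun i => ?_, fun i j => ?_, fun i => ?_⟩
  · rw [hval, hval, Sym2.eq_swap, hE.1 i j]
  · have hdiag : ∀ {l}, s(i, i) ∉ labelEdges L l := fun hl =>
      ((mem_labelEdges_iff hE.isSymm).1 hl).1 rfl
    have he : s(i, i) ≠ e := fun hg => hdiag (hg ▸ h.mem_two)
    have hR : s(i, i) ∉ R := fun hg => hdiag (h.subset_zero _ hg)
    rw [hval, hE.2.1]
    simp [he, hR]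
  · have := hE.2.2.1 i j
    rw [hval]
    split_ifs <;> simp [this]
  · rw [sum_switch, hE.2.2.2, h.balanced]
    ring

lemma labelEdges_two (h : IsReducing L e f S R) (hE : IsEncoding d L) :
    labelEdges (switch L (insert e S) (insert f R)) 2 = labelEdges L 2 \ {e} := by
  ext g
  induction g with | h x y => ?_
  have hlabel := h.label_eq hE.isSymm x y
  rw [Set.mem_sdiff, mem_labelEdges_iff (h.isEncoding hE).isSymm, mem_labelEdges_iff hE.isSymm,
    h.switch_apply hE.isSymm, Set.mem_singleton_iff]
  grind

lemma labelEdges_neg_one (h : IsReducing L e f S R) (hE : IsEncoding d L) :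
    labelEdges (switch L (insert e S) (insert f R)) (-1) = labelEdges L (-1) \ {f} := by
  ext g
  induction g with | h x y => ?_
  have hlabel := h.label_eq hE.isSymm x y
  rw [Set.mem_sdiff, mem_labelEdges_iff (h.isEncoding hE).isSymm, mem_labelEdges_iff hE.isSymm,
    h.switch_apply hE.isSymm, Set.mem_singleton_iff]
  grind

lemma switch_apply_eq_or (h : IsReducing L e f S R) (hL : L.IsSymm) (i j : Fin n) :
    switch L (insert e S) (insert f R) i j = L i j ∨
      switch L (insert e S) (insert f R) i j = 0 ∨ switch L (insert e S) (insert f R) i j = 1 := by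
  rw [h.switch_apply hL]
  split_ifs <;> simp

lemma defectsWithin (h : IsReducing L e f S R) (hL : L.IsSymm) {D : Set (Sym2 (Fin n) × ℤ)}
    (hD : DefectsWithin L D) : DefectsWithin (switch L (insert e S) (insert f R)) D := by
  intro x y hxy hdef
  rcases h.switch_apply_eq_or hL x y with heq | h0 | h1
  · rw [heq] at hdef ⊢
    exact hD x y hxy hdef
  · simp [h0] at hdef
  · simp [h1] at hdef

lemma consistentWith (h : IsReducing L e f S R) (hL : L.IsSymm) (hZ : ConsistentWith L Z) :
    ConsistentWith (switch L (insert e S) (insert f R)) Z := by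
  intro i j
  rcases h.switch_apply_eq_or hL i j with heq | h0 | h1
  · rw [heq]
    exact hZ i j
  · rw [h0, adjMat]
    split_ifs <;> simp
  · rw [h1, adjMat]
    split_ifs <;> simp

lemma validEncoding (h : IsReducing L e f S R) (hV : ValidEncoding d L) :
    ValidEncoding d (switch L (insert e S) (insert f R)) := by
  have hE := hV.1
  have hD : ∀ {D}, DefectsWithin L D → DefectsWithin (switch L (insert e S) (insert f R)) D :=
    h.defectsWithin hE.isSymm
  obtain ⟨-, hcard, a, b, c, u, v, w, ℓ, hℓ, hconf⟩ := hV
  refine ⟨h.isEncoding hE, ?_, a, b, c, u, v, w, ℓ, hℓ, ?_⟩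
  · rw [h.labelEdges_two hE, h.labelEdges_neg_one hE]
    exact (add_le_add (Set.ncard_sdiff_singleton_le _ _) (Set.ncard_sdiff_singleton_le _ _)).trans
      hcard
  · exact hconf.imp (.imp_right <| .imp_right <| .imp_right <| .imp_right hD) <|
      .imp (.imp_right hD) <| .imp (.imp_right hD) <| .imp (.imp_right hD) (.imp_right hD)

lemma goodEncoding (h : IsReducing L e f S R) (hG : GoodEncoding d L) :
    GoodEncoding d (switch L (insert e S) (insert f R)) := by
  have hdef : ∀ {l}, (l = 2 ∨ l = -1) → ∀ {x y},
      switch L (insert e S) (insert f R) x y = l → L x y = l := by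
    intro l hl x y hxy
    rcases h.switch_apply_eq_or hG.1.1.isSymm x y with heq | h0 | h1 <;> lia
  exact ⟨h.validEncoding hG.1, fun x y hxy h2 => hG.2.1 x y hxy (hdef (.inl rfl) h2),
    fun x y z hxy hyz hxz h2 h2' =>
      hG.2.2.1 x y z hxy hyz hxz (hdef (.inl rfl) h2) (hdef (.inl rfl) h2'),
    fun x y z hxy hyz hxz h2 hneg =>
      hG.2.2.2 x y z hxy hyz hxz (hdef (.inl rfl) h2) (hdef (.inr rfl) hneg)⟩

lemma mem_Cset (h : IsReducing L e f S R) (hL : L ∈ Cset d Z p q) :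
    switch L (insert e S) (insert f R) ∈ Cset d Z (p - 1) (q - 1) := by
  obtain ⟨hG, hZ, hp, hq⟩ := hL
  have hE := hG.1.1
  refine ⟨h.goodEncoding hG, h.consistentWith hE.isSymm hZ, ?_, ?_⟩
  · rw [h.labelEdges_two hE, Set.ncard_sdiff_singleton_of_mem h.mem_two, hp]
  · rw [h.labelEdges_neg_one hE, Set.ncard_sdiff_singleton_of_mem h.mem_neg_one, hq]

lemma adj_one (h : IsReducing L e f S R) (hE : IsEncoding d L)
    (hij : s(i, j) = e ∨ s(i, j) ∈ R) :
    (labelGraph (switch L (insert e S) (insert f R)) 1).Adj i j := by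
  rw [labelGraph_adj_iff (h.isEncoding hE).isSymm, h.switch_apply hE.isSymm, if_pos hij]
  refine ⟨?_, rfl⟩
  have hne : ∀ {l}, s(i, j) ∈ labelEdges L l → i ≠ j :=
    fun hl => ((mem_labelEdges_iff hE.isSymm).1 hl).1
  exact hij.elim (fun hg => hne (hg ▸ h.mem_two)) fun hg => hne (h.subset_zero _ hg)

lemma degree_neg_one (h : IsReducing L e s(b, c) S R) (hE : IsEncoding d L) :
    (labelGraph (switch L (insert e S) (insert s(b, c) R)) (-1)).degree b =
      (labelGraph L (-1)).degree b - 1 := by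
  have hbc : (labelGraph L (-1)).Adj b c := labelGraph_adj_iff_mem.2 h.mem_neg_one
  rw [← SimpleGraph.card_neighborFinset_eq_degree, ← SimpleGraph.card_neighborFinset_eq_degree,
    ← card_erase_of_mem ((SimpleGraph.mem_neighborFinset _ b c).2 hbc)]
  congr 1
  ext w
  simp only [SimpleGraph.mem_neighborFinset, mem_erase, labelGraph_adj_iff_mem,
    h.labelEdges_neg_one hE, Set.mem_sdiff, Set.mem_singleton_iff, Sym2.congr_right]
  exact and_comm

end IsReducing

end Switching

section Walks

open Finset

variable {d : Fin n → ℕ} {L : Matrix (Fin n) (Fin n) ℤ} {a b c x y z : Fin n}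

/-- The vertices `x` for which a corner `(a, b, c)` closes up to a walk `a b c x` that can be
switched: `cx` is labelled 1 and `xa` is labelled 0. -/
def shortWalks (L : Matrix (Fin n) (Fin n) ℤ) (a c : Fin n) : Finset (Fin n) :=
  (labelGraph L 1).neighborFinset c ∩ (labelGraph L 0).neighborFinset a

/-- The triples `(x, y, z)` for which a corner `(a, b, c)` closes up to a walk `a b c x y z` that
can be switched: `cx` and `yz` are labelled 1 and `xy` and `za` are labelled 0. The vertices `x`
that already give a short walk are left out. -/
def longWalks (L : Matrix (Fin n) (Fin n) ℤ) (a c : Fin n) :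
    Finset (Σ _ : Fin n, Fin n × Fin n) :=
  ((labelGraph L 1).neighborFinset c \ (labelGraph L 0).neighborFinset a).sigma fun x =>
    (labelGraph L 1).interedges ((labelGraph L 0).neighborFinset x)
      ((labelGraph L 0).neighborFinset a)

lemma mem_shortWalks :
    x ∈ shortWalks L a c ↔ (labelGraph L 1).Adj c x ∧ (labelGraph L 0).Adj a x := by
  simp [shortWalks]

lemma mem_longWalks :
    ⟨x, y, z⟩ ∈ longWalks L a c ↔
      ((labelGraph L 1).Adj c x ∧ ¬(labelGraph L 0).Adj a x) ∧ (labelGraph L 0).Adj x y ∧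
        (labelGraph L 0).Adj a z ∧ (labelGraph L 1).Adj y z := by
  simp [longWalks, SimpleGraph.mk_mem_interedges_iff]

lemma ite_mem_sym2_mk {u v : Fin n} (huv : u ≠ v) (w : Fin n) :
    (if w ∈ s(u, v) then 1 else 0) = (if w = u then 1 else 0) + if w = v then 1 else 0 := by
  grind

lemma isReducing_of_mem_shortWalks (hL : L.IsSymm) (hc : IsCorner L a b c)
    (hx : x ∈ shortWalks L a c) : IsReducing L s(a, b) s(b, c) {s(c, x)} {s(x, a)} := by
  obtain ⟨hcx, hax⟩ := mem_shortWalks.1 hx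
  have hlower : s(a, b) ≠ s(c, x) := (disjoint_labelEdges hL (by decide : (2 : ℤ) ≠ 1)).ne_of_mem
    (labelGraph_adj_iff_mem.1 hc.1) (labelGraph_adj_iff_mem.1 hcx)
  have hraise : s(b, c) ≠ s(x, a) := (disjoint_labelEdges hL (by decide : (-1 : ℤ) ≠ 0)).ne_of_mem
    (labelGraph_adj_iff_mem.1 hc.2.1) (labelGraph_adj_iff_mem.1 hax.symm)
  refine ⟨labelGraph_adj_iff_mem.1 hc.1, labelGraph_adj_iff_mem.1 hc.2.1, ?_, ?_, fun v => ?_⟩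
  · simpa using labelGraph_adj_iff_mem.1 hcx
  · simpa using labelGraph_adj_iff_mem.1 hax.symm
  · simp only [card_filter, sum_pair hlower, sum_pair hraise, ite_mem_sym2_mk hc.1.ne,
      ite_mem_sym2_mk hc.2.1.ne, ite_mem_sym2_mk hcx.ne, ite_mem_sym2_mk hax.ne']
    ring

lemma isReducing_of_mem_longWalks (hL : L.IsSymm) (hc : IsCorner L a b c)
    (hxyz : ⟨x, y, z⟩ ∈ longWalks L a c) :
    IsReducing L s(a, b) s(b, c) {s(c, x), s(y, z)} {s(x, y), s(z, a)} := by
  obtain ⟨⟨hcx, hax⟩, hxy, haz, hyz⟩ := mem_longWalks.1 hxyz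
  have hlower : s(a, b) ∉ ({s(c, x), s(y, z)} : Finset (Sym2 (Fin n))) := by
    have hdisj := disjoint_labelEdges hL (by decide : (2 : ℤ) ≠ 1)
    simp [hdisj.ne_of_mem (labelGraph_adj_iff_mem.1 hc.1) (labelGraph_adj_iff_mem.1 hcx),
      hdisj.ne_of_mem (labelGraph_adj_iff_mem.1 hc.1) (labelGraph_adj_iff_mem.1 hyz)]
  have hraise : s(b, c) ∉ ({s(x, y), s(z, a)} : Finset (Sym2 (Fin n))) := by
    have hdisj := disjoint_labelEdges hL (by decide : (-1 : ℤ) ≠ 0)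
    simp [hdisj.ne_of_mem (labelGraph_adj_iff_mem.1 hc.2.1) (labelGraph_adj_iff_mem.1 hxy),
      hdisj.ne_of_mem (labelGraph_adj_iff_mem.1 hc.2.1) (labelGraph_adj_iff_mem.1 haz.symm)]
  have hxz : x ≠ z := fun h => hax (h ▸ haz)
  have hlower' : s(c, x) ≠ s(y, z) := fun h => by
    have := Sym2.mem_iff.1 (h ▸ Sym2.mem_mk_right c x)
    exact this.elim hxy.ne hxz
  have hraise' : s(x, y) ≠ s(z, a) := fun h => by
    have := Sym2.mem_iff.1 (h ▸ Sym2.mem_mk_left z a)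
    exact this.elim hxz.symm hyz.ne'
  refine ⟨labelGraph_adj_iff_mem.1 hc.1, labelGraph_adj_iff_mem.1 hc.2.1, ?_, ?_, fun v => ?_⟩
  · simp [← labelGraph_adj_iff_mem, hcx, hyz]
  · simp [← labelGraph_adj_iff_mem, hxy, haz.symm]
  · simp only [card_filter, sum_insert hlower, sum_insert hraise, sum_pair hlower',
      sum_pair hraise', ite_mem_sym2_mk hc.1.ne, ite_mem_sym2_mk hc.2.1.ne, ite_mem_sym2_mk hcx.ne,
      ite_mem_sym2_mk hxy.ne, ite_mem_sym2_mk hyz.ne, ite_mem_sym2_mk haz.ne']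
    ring

lemma add_le_card_interedges (hE : IsEncoding d L) (hc : IsCorner L a b c)
    (hcx : (labelGraph L 1).Adj c x) :
    M d + 5 * dmax d ≤
      #((labelGraph L 1).interedges ((labelGraph L 0).neighborFinset x)
          ((labelGraph L 0).neighborFinset a)) +
        2 * dmax d ^ 2 + 4 * (labelEdges L (-1)).ncard * dmax d +
        2 * (labelEdges L (-1)).ncard + 4 * (labelEdges L 2).ncard := by
  set D := dmax d
  set p := (labelEdges L 2).ncard
  set q := (labelEdges L (-1)).ncard
  have hbad_x : #((labelGraph L 0).neighborFinset x)ᶜ + 1 ≤ D + 2 * q := by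
    have hcompl := hE.card_compl_neighborFinset_zero_add_le x
    have hxb : x ≠ b := by
      rintro rfl
      simpa using label_unique hE.isSymm hcx hc.2.1.symm
    have hdeg : (labelGraph L (-1)).degree x < q :=
      degree_labelGraph_lt_ncard hc.2.1 hxb hcx.ne'
    have hdx : d x ≤ D := le_dmax d x
    lia
  have hbad_a : #((labelGraph L 0).neighborFinset a)ᶜ + 4 ≤ D + 2 * q := by
    have hcompl := hE.card_compl_neighborFinset_zero_add_le a
    have hdeg : (labelGraph L (-1)).degree a + 2 ≤ q := hc.degree_neg_one_add_two_le hE.isSymm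
    have hpos : 0 < (labelGraph L 2).degree a :=
      (SimpleGraph.degree_pos_iff_exists_adj _ a).2 ⟨b, hc.1⟩
    have hda : d a ≤ D := le_dmax d a
    lia
  have htotal : ∑ v, (labelGraph L 1).degree v + 4 * p = M d + 2 * q := hE.sum_degree_one
  have hcover := sum_degrees_le_card_interedges_add (labelGraph L 1)
    ((labelGraph L 0).neighborFinset x) ((labelGraph L 0).neighborFinset a)
  have hsum_x := hE.sum_degree_one_le ((labelGraph L 0).neighborFinset x)ᶜ
  have hsum_a := hE.sum_degree_one_le ((labelGraph L 0).neighborFinset a)ᶜ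
  have hmul_x := Nat.mul_le_mul_right D hbad_x
  have hmul_a := Nat.mul_le_mul_right D hbad_a
  rw [add_mul, add_mul] at hmul_x hmul_a
  lia

lemma two_mul_le_card_walks (hG : GoodEncoding d L) (hdc : 1 ≤ d c) (hc : IsCorner L a b c)
    (hfour : (labelEdges L 2).ncard + (labelEdges L (-1)).ncard = 4) {K : ℕ}
    (hK : K + (2 * dmax d ^ 2 + 7 * dmax d + 10) ≤ M d) :
    2 * K ≤ K * #(shortWalks L a c) + #(longWalks L a c) := by
  have hp := hc.one_le_ncard_two
  have hq := hc.two_le_ncard_neg_one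
  have hD := hc.three_le_dmax hG
  have hlong : ∀ x ∈ (labelGraph L 1).neighborFinset c \ (labelGraph L 0).neighborFinset a,
      K ≤ #((labelGraph L 1).interedges ((labelGraph L 0).neighborFinset x)
        ((labelGraph L 0).neighborFinset a)) := by
    intro x hx
    rw [mem_sdiff, SimpleGraph.mem_neighborFinset] at hx
    have hpairs := add_le_card_interedges hG.1.1 hc hx.1
    obtain ⟨h2, h3⟩ | ⟨h2, h3⟩ : (labelEdges L 2).ncard = 1 ∧ (labelEdges L (-1)).ncard = 3 ∨
      (labelEdges L 2).ncard = 2 ∧ (labelEdges L (-1)).ncard = 2 := by lia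
    all_goals
      rw [h2, h3] at hpairs
      lia
  calc 2 * K ≤ K * (labelGraph L 1).degree c := by
        rw [mul_comm]
        exact Nat.mul_le_mul_left K (hc.two_le_degree_one hG hdc (by lia))
    _ = K * #(shortWalks L a c) +
          #((labelGraph L 1).neighborFinset c \ (labelGraph L 0).neighborFinset a) * K := by
      rw [← SimpleGraph.card_neighborFinset_eq_degree, shortWalks, mul_comm _ K, ← mul_add,
        card_inter_add_card_sdiff]
    _ ≤ K * #(shortWalks L a c) + #(longWalks L a c) := by
      rw [longWalks, card_sigma]
      gcongr
      exact card_nsmul_le_sum _ _ _ hlong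

end Walks

section Reversal

open Finset

variable {d : Fin n → ℕ} {L : Matrix (Fin n) (Fin n) ℤ} {a b c x y z : Fin n}
  {S R : Finset (Sym2 (Fin n))}

/-- What a corner `(a, b, c)` leaves behind after a switching: `ab` is labelled 1 and exactly one
(−1)-defect edge remains at `b`. -/
def IsReducedCorner (L : Matrix (Fin n) (Fin n) ℤ) (a b : Fin n) : Prop :=
  (labelGraph L 1).Adj a b ∧ (labelGraph L (-1)).degree b = 1

lemma IsReducing.isReducedCorner (h : IsReducing L s(a, b) s(b, c) S R) (hE : IsEncoding d L)
    (hc : IsCorner L a b c) :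
    IsReducedCorner (switch L (insert s(a, b) S) (insert s(b, c) R)) a b :=
  ⟨h.adj_one hE (.inl rfl), by rw [h.degree_neg_one hE, hc.2.2]⟩

/-- Candidates for the vertex `x` of a short walk `a b c x` whose switching produced `L`. -/
def shortReversals (L : Matrix (Fin n) (Fin n) ℤ) (a b : Fin n) : Finset (Fin n) :=
  ((labelGraph L 1).neighborFinset a).erase b

/-- Candidates for the triple `(x, y, z)` of a long walk `a b c x y z` whose switching produced `L`.
The three parts cover `x = a`, then `ax` labelled 1, then `ax` a defect edge. -/
def longReversals (L : Matrix (Fin n) (Fin n) ℤ) (a b : Fin n) :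
    Finset (Σ _ : Fin n, Fin n × Fin n) :=
  ({a} : Finset (Fin n)).sigma (fun _ => shortReversals L a b ×ˢ shortReversals L a b) ∪
    (shortReversals L a b).sigma
      (fun x => ((labelGraph L 1).neighborFinset x).erase a ×ˢ (shortReversals L a b).erase x) ∪
    ((labelGraph L 2).neighborFinset a ∪ (labelGraph L (-1)).neighborFinset a).sigma
      (fun x => (labelGraph L 1).neighborFinset x ×ˢ shortReversals L a b)

lemma mem_shortReversals : x ∈ shortReversals L a b ↔ x ≠ b ∧ (labelGraph L 1).Adj a x := by
  simp [shortReversals]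

lemma mem_longReversals :
    ⟨x, y, z⟩ ∈ longReversals L a b ↔
      x = a ∧ y ∈ shortReversals L a b ∧ z ∈ shortReversals L a b ∨
      x ∈ shortReversals L a b ∧ (y ≠ a ∧ (labelGraph L 1).Adj x y) ∧
        z ≠ x ∧ z ∈ shortReversals L a b ∨
      ((labelGraph L 2).Adj a x ∨ (labelGraph L (-1)).Adj a x) ∧
        (labelGraph L 1).Adj x y ∧ z ∈ shortReversals L a b := by
  simp [longReversals]

lemma mem_shortReversals_switch (hE : IsEncoding d L) (hc : IsCorner L a b c)
    (hx : x ∈ shortWalks L a c) :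
    x ∈ shortReversals (switch L {s(a, b), s(c, x)} {s(b, c), s(x, a)}) a b := by
  have hred := isReducing_of_mem_shortWalks hE.isSymm hc hx
  refine mem_shortReversals.2 ⟨?_, (hred.adj_one hE (.inr (mem_singleton_self _))).symm⟩
  rintro rfl
  simpa using label_unique hE.isSymm (mem_shortWalks.1 hx).2 hc.1

lemma switch_apply_of_mem_longWalks (hL : L.IsSymm) (hc : IsCorner L a b c)
    (hxyz : ⟨x, y, z⟩ ∈ longWalks L a c) :
    switch L {s(a, b), s(c, x), s(y, z)} {s(b, c), s(x, y), s(z, a)} a x = L a x := by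
  have hred := isReducing_of_mem_longWalks hL hc hxyz
  obtain ⟨⟨hcx, hax⟩, hxy, haz, -⟩ := mem_longWalks.1 hxyz
  have hxb : x ≠ b := by
    rintro rfl
    simpa using label_unique hL hcx hc.2.1.symm
  have hxz : x ≠ z := fun h => hax (h ▸ haz)
  have hac := hc.ne_ends hL
  refine hred.switch_apply_of_notMem hL ?_ ?_
  · simp only [mem_insert, mem_singleton, Sym2.eq_iff]
    have := hxy.ne
    grind
  · rw [mem_insert, not_or]
    refine ⟨?_, fun h => hax (labelGraph_adj_iff_mem.2 (hred.subset_zero _ h))⟩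
    rw [Sym2.eq_iff]
    have := hc.1.ne
    tauto

lemma mem_longReversals_switch (hE : IsEncoding d L) (hc : IsCorner L a b c)
    (hxyz : ⟨x, y, z⟩ ∈ longWalks L a c) :
    ⟨x, y, z⟩ ∈
      longReversals (switch L {s(a, b), s(c, x), s(y, z)} {s(b, c), s(x, y), s(z, a)}) a b := by
  have hred := isReducing_of_mem_longWalks hE.isSymm hc hxyz
  have hE' := hred.isEncoding hE
  have hkeep := switch_apply_of_mem_longWalks hE.isSymm hc hxyz
  have hxy' := hred.adj_one hE (i := x) (j := y) (.inr (by simp))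
  have hza' := hred.adj_one hE (i := z) (j := a) (.inr (by simp))
  set L' := switch L {s(a, b), s(c, x), s(y, z)} {s(b, c), s(x, y), s(z, a)}
  obtain ⟨⟨hcx, hax⟩, hxy, haz, -⟩ := mem_longWalks.1 hxyz
  have hne_b : ∀ {w}, (labelGraph L 0).Adj a w → w ≠ b := by
    rintro w hw rfl
    simpa using label_unique hE.isSymm hw hc.1
  have hz : z ∈ shortReversals L' a b := mem_shortReversals.2 ⟨hne_b haz, hza'.symm⟩
  rw [mem_longReversals]
  rcases eq_or_ne a x with rfl | hne
  · exact .inl ⟨rfl, mem_shortReversals.2 ⟨hne_b hxy, hxy'⟩, hz⟩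
  have htransfer : ∀ {l}, (labelGraph L l).Adj a x → (labelGraph L' l).Adj a x := by
    intro l
    rw [labelGraph_adj_iff hE.isSymm, labelGraph_adj_iff hE'.isSymm, hkeep]
    exact id
  rcases hE.adj_one_or_two_or_neg_one hne hax with h1 | h2 | hneg
  · have hxb : x ≠ b := by
      rintro rfl
      simpa using label_unique hE.isSymm hcx hc.2.1.symm
    have hya : y ≠ a := fun h => hax (h ▸ hxy).symm
    have hzx : z ≠ x := fun h => hax (h ▸ haz)
    exact .inr (.inl ⟨mem_shortReversals.2 ⟨hxb, htransfer h1⟩, ⟨hya, hxy'⟩, hzx, hz⟩)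
  · exact .inr (.inr ⟨.inl (htransfer h2), hxy', hz⟩)
  · exact .inr (.inr ⟨.inr (htransfer hneg), hxy', hz⟩)

namespace IsReducedCorner

lemma degree_neg_one_lt (hr : IsReducedCorner L a b) (hL : L.IsSymm) :
    (labelGraph L (-1)).degree a < (labelEdges L (-1)).ncard := by
  have hnadj : ¬(labelGraph L (-1)).Adj a b := fun h => by simpa using label_unique hL hr.1 h
  have := degree_labelGraph_add_le_ncard hr.1.ne hnadj
  rwa [hr.2] at this

lemma card_shortReversals_le (hr : IsReducedCorner L a b) (hE : IsEncoding d L)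
    (hneg : (labelEdges L (-1)).ncard ≤ 2) : #(shortReversals L a b) ≤ dmax d := by
  rw [shortReversals, card_erase_of_mem ((SimpleGraph.mem_neighborFinset _ a b).2 hr.1),
    SimpleGraph.card_neighborFinset_eq_degree]
  have hdeg := hE.degree_one_le a
  have hlt := hr.degree_neg_one_lt hE.isSymm
  lia

lemma card_defect_neighbors_le (hr : IsReducedCorner L a b) (hE : IsEncoding d L)
    (htwo : (labelEdges L 2).ncard + (labelEdges L (-1)).ncard ≤ 2) :
    #((labelGraph L 2).neighborFinset a ∪ (labelGraph L (-1)).neighborFinset a) ≤ 1 := by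
  refine (card_union_le _ _).trans ?_
  simp only [SimpleGraph.card_neighborFinset_eq_degree]
  have hdeg : (labelGraph L 2).degree a ≤ (labelEdges L 2).ncard := degree_labelGraph_le_ncard
  have hneg := hr.degree_neg_one_lt hE.isSymm
  lia

lemma card_longReversals_le (hr : IsReducedCorner L a b) (hE : IsEncoding d L)
    (htwo : (labelEdges L 2).ncard + (labelEdges L (-1)).ncard ≤ 2) :
    #(longReversals L a b) ≤ dmax d * (dmax d + 1) ^ 2 := by
  have hshort : #(shortReversals L a b) ≤ dmax d := hr.card_shortReversals_le hE (by lia)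
  set D := dmax d
  set k := #(shortReversals L a b)
  have hdegree : ∀ x, #((labelGraph L 1).neighborFinset x) ≤ D + 2 := fun x => by
    rw [SimpleGraph.card_neighborFinset_eq_degree]
    exact (hE.degree_one_le x).trans
      (Nat.add_le_add_left (degree_labelGraph_le_ncard.trans (by lia)) _)
  have hone : ∀ x ∈ shortReversals L a b,
      #(((labelGraph L 1).neighborFinset x).erase a ×ˢ (shortReversals L a b).erase x) ≤
        (D + 1) * (k - 1) := fun x hx => by
    have hax := (mem_shortReversals.1 hx).2
    rw [card_product, card_erase_of_mem hx,
      card_erase_of_mem ((SimpleGraph.mem_neighborFinset _ x a).2 hax.symm)]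
    exact Nat.mul_le_mul_right _ (Nat.sub_le_of_le_add (hdegree x))
  have hdefect : ∀ x ∈ (labelGraph L 2).neighborFinset a ∪ (labelGraph L (-1)).neighborFinset a,
      #((labelGraph L 1).neighborFinset x ×ˢ shortReversals L a b) ≤ (D + 2) * k := fun x _ =>
    (card_product _ _).trans_le (Nat.mul_le_mul_right _ (hdegree x))
  calc #(longReversals L a b) ≤ k * k + k * ((D + 1) * (k - 1)) + 1 * ((D + 2) * k) := by
        rw [longReversals]
        refine (card_union_le _ _).trans (add_le_add ((card_union_le _ _).trans
          (add_le_add ?_ ?_)) ?_)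
        · simp [k]
        · rw [card_sigma]
          exact sum_le_card_nsmul _ _ _ hone
        · rw [card_sigma]
          exact (sum_le_card_nsmul _ _ _ hdefect).trans (Nat.mul_le_mul_right _
            (hr.card_defect_neighbors_le hE htwo))
    _ ≤ k * (k * (D + 2) + 1) := by
      rcases k with _ | m
      · simp
      · rw [Nat.add_sub_cancel]
        exact le_of_eq (by ring)
    _ ≤ D * (D * (D + 2) + 1) := by gcongr
    _ = D * (D + 1) ^ 2 := by ring

end IsReducedCorner

end Reversal

section DoubleCounting

open Finset

variable {d : Fin n → ℕ} {L : Matrix (Fin n) (Fin n) ℤ} {a b c : Fin n} {p q K : ℕ}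
  {Z : SimpleGraph (Fin n)}

lemma sum_card_le_sum_card_of_injective {α τ : Type*} {C C' : Finset α} {F R : α → Finset τ}
    (φ : τ → α → α) (hφ : ∀ t, Function.Injective (φ t))
    (hmaps : ∀ L ∈ C, ∀ t ∈ F L, φ t L ∈ C' ∧ t ∈ R (φ t L)) :
    ∑ L ∈ C, #(F L) ≤ ∑ L ∈ C', #(R L) := by
  rw [← card_sigma, ← card_sigma]
  refine card_le_card_of_injOn (fun s => ⟨φ s.2 s.1, s.2⟩) (fun s hs => ?_) ?_
  · obtain ⟨hL, ht⟩ := mem_sigma.1 hs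
    exact mem_sigma.2 (hmaps _ hL _ ht)
  · rintro ⟨L, t⟩ - ⟨L', t'⟩ - h
    obtain ⟨hL, ht⟩ := Sigma.mk.inj_iff.1 h
    obtain rfl := eq_of_heq ht
    exact congrArg (Sigma.mk · t) (hφ t hL)

lemma Cset_finite (d : Fin n → ℕ) (Z : SimpleGraph (Fin n)) (p q : ℕ) : (Cset d Z p q).Finite := by
  refine (Set.Finite.pi' fun _ => Set.Finite.pi' fun _ => Set.finite_Icc (-1 : ℤ) 2).subset
    fun L hL i j => ?_
  have := hL.1.1.1.2.2.1 i j
  rw [Set.mem_Icc]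
  lia

/-- The finite set `C(p, q)` of the paper as a `Finset`. -/
def encodings (d : Fin n → ℕ) (Z : SimpleGraph (Fin n)) (p q : ℕ) :
    Finset (Matrix (Fin n) (Fin n) ℤ) :=
  (Cset_finite d Z p q).toFinset

lemma mem_encodings : L ∈ encodings d Z p q ↔ L ∈ Cset d Z p q := Set.Finite.mem_toFinset _

lemma card_encodings : #(encodings d Z p q) = (Cset d Z p q).ncard :=
  (Set.ncard_eq_toFinset_card _ _).symm

lemma sum_card_shortWalks_le (hq : q ≤ 3) :
    ∑ L ∈ encodings d Z p q with IsCorner L a b c, #(shortWalks L a c) ≤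
      #{L ∈ encodings d Z (p - 1) (q - 1) | IsReducedCorner L a b} * dmax d := by
  refine (sum_card_le_sum_card_of_injective (R := fun L => shortReversals L a b)
    (fun x L => switch L {s(a, b), s(c, x)} {s(b, c), s(x, a)})
    (fun x => switch_injective _ _) fun L hL x hx => ?_).trans
    (sum_le_card_nsmul _ _ _ fun L hL => ?_)
  · simp only [mem_filter, mem_encodings] at hL ⊢
    have hE := hL.1.1.1.1
    have hred := isReducing_of_mem_shortWalks hE.isSymm hL.2 hx
    exact ⟨⟨hred.mem_Cset hL.1, hred.isReducedCorner hE hL.2⟩,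
      mem_shortReversals_switch hE hL.2 hx⟩
  · simp only [mem_filter, mem_encodings] at hL
    obtain ⟨⟨hG, -, -, hneg⟩, hr⟩ := hL
    exact hr.card_shortReversals_le hG.1.1 (by lia)

lemma sum_card_longWalks_le (hpq : p - 1 + (q - 1) ≤ 2) :
    ∑ L ∈ encodings d Z p q with IsCorner L a b c, #(longWalks L a c) ≤
      #{L ∈ encodings d Z (p - 1) (q - 1) | IsReducedCorner L a b} *
        (dmax d * (dmax d + 1) ^ 2) := by
  refine (sum_card_le_sum_card_of_injective (R := fun L => longReversals L a b)
    (fun t L => switch L {s(a, b), s(c, t.1), s(t.2.1, t.2.2)}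
      {s(b, c), s(t.1, t.2.1), s(t.2.2, a)})
    (fun t => switch_injective _ _) fun L hL t ht => ?_).trans
    (sum_le_card_nsmul _ _ _ fun L hL => ?_)
  · simp only [mem_filter, mem_encodings] at hL ⊢
    have hE := hL.1.1.1.1
    have hred := isReducing_of_mem_longWalks hE.isSymm hL.2 ht
    exact ⟨⟨hred.mem_Cset hL.1, hred.isReducedCorner hE hL.2⟩,
      mem_longReversals_switch hE hL.2 ht⟩
  · simp only [mem_filter, mem_encodings] at hL
    obtain ⟨⟨hG, -, htwo, hneg⟩, hr⟩ := hL
    exact hr.card_longReversals_le hG.1.1 (by lia)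

lemma mul_card_isCorner_le (hdc : 1 ≤ d c) (hpq : p + q = 4) (hp : 1 ≤ p) (hq : 1 ≤ q)
    (hK : K + (2 * dmax d ^ 2 + 7 * dmax d + 10) ≤ M d) :
    2 * K * #{L ∈ encodings d Z p q | IsCorner L a b c} ≤
      #{L ∈ encodings d Z (p - 1) (q - 1) | IsReducedCorner L a b} *
        (dmax d * (K + (dmax d + 1) ^ 2)) :=
  calc 2 * K * #{L ∈ encodings d Z p q | IsCorner L a b c}
      ≤ ∑ L ∈ encodings d Z p q with IsCorner L a b c,
          (K * #(shortWalks L a c) + #(longWalks L a c)) := by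
        rw [mul_comm, ← smul_eq_mul]
        refine card_nsmul_le_sum _ _ _ fun L hL => ?_
        simp only [mem_filter, mem_encodings] at hL
        obtain ⟨⟨hG, -, rfl, rfl⟩, hc⟩ := hL
        exact two_mul_le_card_walks hG hdc hc hpq hK
    _ ≤ K * (#{L ∈ encodings d Z (p - 1) (q - 1) | IsReducedCorner L a b} * dmax d) +
          #{L ∈ encodings d Z (p - 1) (q - 1) | IsReducedCorner L a b} *
            (dmax d * (dmax d + 1) ^ 2) := by
        rw [sum_add_distrib, ← mul_sum]
        exact add_le_add (Nat.mul_le_mul_left K (sum_card_shortWalks_le (by lia)))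
          (sum_card_longWalks_le (by lia))
    _ = _ := by ring

lemma two_mul_card_encodings_le (hpq : p + q = 4) :
    2 * #(encodings d Z p q) ≤
      ∑ t : Fin n × Fin n × Fin n, #{L ∈ encodings d Z p q | IsCorner L t.1 t.2.1 t.2.2} :=
  calc 2 * #(encodings d Z p q)
      ≤ ∑ L ∈ encodings d Z p q, #{t : Fin n × Fin n × Fin n | IsCorner L t.1 t.2.1 t.2.2} := by
        rw [mul_comm, ← smul_eq_mul]
        refine card_nsmul_le_sum _ _ _ fun L hL => ?_
        obtain ⟨hG, -, rfl, rfl⟩ := mem_encodings.1 hL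
        obtain ⟨a, b, c, c', hcc', hc, hc'⟩ := hG.1.exists_corners hpq
        exact one_lt_card.2 ⟨(a, b, c), mem_filter_univ _ |>.2 hc, (a, b, c'),
          mem_filter_univ _ |>.2 hc', by simpa using hcc'⟩
    _ = _ := sum_card_bipartiteAbove_eq_sum_card_bipartiteBelow _

lemma card_isReducedCorner_le (hE : IsEncoding d L) (hneg : (labelEdges L (-1)).ncard ≤ 2) :
    #{s : Fin n × Fin n | IsReducedCorner L s.1 s.2} ≤ 4 * (dmax d + 1) := by
  have hfibre : ∀ b, #{a | IsReducedCorner L a b} ≤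
      (dmax d + 1) * (labelGraph L (-1)).degree b := fun b => by
    by_cases hb : (labelGraph L (-1)).degree b = 1
    · have hdeg := hE.degree_one_le b
      rw [← SimpleGraph.card_neighborFinset_eq_degree, hb] at hdeg
      rw [hb, mul_one]
      refine (card_le_card fun a ha => ?_).trans hdeg
      rw [SimpleGraph.mem_neighborFinset]
      exact ((mem_filter_univ _).1 ha).1.symm
    · simp [IsReducedCorner, hb]
  calc #{s : Fin n × Fin n | IsReducedCorner L s.1 s.2}
      = ∑ b, #{a | IsReducedCorner L a b} := by
        simp only [card_filter]
        rw [Fintype.sum_prod_type_right]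
    _ ≤ ∑ b, (dmax d + 1) * (labelGraph L (-1)).degree b := sum_le_sum fun b _ => hfibre b
    _ = (dmax d + 1) * (2 * (labelEdges L (-1)).ncard) := by
        rw [← mul_sum, sum_degree_labelGraph]
    _ ≤ 4 * (dmax d + 1) := by
        rw [mul_comm]
        gcongr
        lia

lemma sum_card_isReducedCorner_le (hq : q ≤ 2) :
    ∑ s : Fin n × Fin n, #{L ∈ encodings d Z p q | IsReducedCorner L s.1 s.2} ≤
      #(encodings d Z p q) * (4 * (dmax d + 1)) := by
  calc ∑ s : Fin n × Fin n, #{L ∈ encodings d Z p q | IsReducedCorner L s.1 s.2}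
      = ∑ L ∈ encodings d Z p q, #{s : Fin n × Fin n | IsReducedCorner L s.1 s.2} :=
        (sum_card_bipartiteAbove_eq_sum_card_bipartiteBelow _).symm
    _ ≤ #(encodings d Z p q) * (4 * (dmax d + 1)) := sum_le_card_nsmul _ _ _ fun L hL => by
        obtain ⟨hG, -, -, rfl⟩ := mem_encodings.1 hL
        exact card_isReducedCorner_le hG.1.1 hq

lemma mul_card_encodings_le (hdmin : ∀ v, 1 ≤ d v) (hpq : p + q = 4) (hp : 1 ≤ p) (hq : 1 ≤ q)
    (hK : K + (2 * dmax d ^ 2 + 7 * dmax d + 10) ≤ M d) :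
    K * #(encodings d Z p q) ≤
      n * #(encodings d Z (p - 1) (q - 1)) *
        (dmax d * ((dmax d + 1) * (K + (dmax d + 1) ^ 2))) := by
  set w := dmax d * (K + (dmax d + 1) ^ 2)
  refine Nat.le_of_mul_le_mul_left ?_ (by decide : 0 < 4)
  calc 4 * (K * #(encodings d Z p q)) = 2 * K * (2 * #(encodings d Z p q)) := by ring
    _ ≤ 2 * K * ∑ t : Fin n × Fin n × Fin n,
          #{L ∈ encodings d Z p q | IsCorner L t.1 t.2.1 t.2.2} :=
        Nat.mul_le_mul_left _ (two_mul_card_encodings_le hpq)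
    _ ≤ ∑ t : Fin n × Fin n × Fin n,
          #{L ∈ encodings d Z (p - 1) (q - 1) | IsReducedCorner L t.1 t.2.1} * w := by
        rw [mul_sum]
        exact sum_le_sum fun t _ => mul_card_isCorner_le (hdmin _) hpq hp hq hK
    _ = n * (∑ s : Fin n × Fin n,
          #{L ∈ encodings d Z (p - 1) (q - 1) | IsReducedCorner L s.1 s.2}) * w := by
        simp only [← sum_mul, Fintype.sum_prod_type, sum_const, card_univ, Fintype.card_fin,
          smul_eq_mul, mul_sum]
    _ ≤ n * (#(encodings d Z (p - 1) (q - 1)) * (4 * (dmax d + 1))) * w := by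
        gcongr
        exact sum_card_isReducedCorner_le (by lia)
    _ = _ := by ring

end DoubleCounting

section Bounds

variable {d : Fin n → ℕ}

lemma nine_mul_dmax_sq_le (h : (dmax d : ℝ) ≤ (1 / 3) * Real.sqrt (M d)) :
    9 * dmax d ^ 2 ≤ M d := by
  have hsqrt : 3 * (dmax d : ℝ) ≤ Real.sqrt (M d) := by linarith
  have hsq := (Real.le_sqrt (by positivity) (Nat.cast_nonneg _)).1 hsqrt
  exact_mod_cast (by linarith : 9 * (dmax d : ℝ) ^ 2 ≤ M d)

lemma card_le_M (hdmin : ∀ v, 1 ≤ d v) : n ≤ M d := by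
  simpa [M] using Finset.sum_le_sum fun v (_ : v ∈ Finset.univ) => hdmin v

lemma weight_le {D K : ℕ} (hD : 3 ≤ D) (hK : 7 * D ^ 2 ≤ K + 7 * D + 10) :
    (D + 1) * (K + (D + 1) ^ 2) ≤ 2 * D * K := by
  obtain ⟨e, rfl⟩ := Nat.exists_eq_add_of_le' hD
  nlinarith

end Bounds

theorem phase1_bound_general (d : Fin n → ℕ) (hdmin : ∀ v, 1 ≤ d v)
    (hdmaxM : (dmax d : ℝ) ≤ (1 / 3) * Real.sqrt (M d)) (Z : SimpleGraph (Fin n)) {p q : ℕ}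
    (hpq : p + q = 4) :
    (Cset d Z p q).ncard ≤ 2 * dmax d ^ 2 * n * (Cset d Z (p - 1) (q - 1)).ncard := by
  obtain hempty | ⟨L, hL⟩ := (Cset d Z p q).eq_empty_or_nonempty
  · simp [hempty]
  obtain ⟨a, b, c, -, -, hc, -⟩ := hL.1.1.exists_corners (by rwa [hL.2.2.1, hL.2.2.2])
  have hp : 1 ≤ p := hL.2.2.1 ▸ hc.one_le_ncard_two
  have hq : 2 ≤ q := hL.2.2.2 ▸ hc.two_le_ncard_neg_one
  have hD : 3 ≤ dmax d := hc.three_le_dmax hL.1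
  have hM : 9 * dmax d ^ 2 ≤ M d := nine_mul_dmax_sq_le hdmaxM
  obtain ⟨K, hK⟩ : ∃ K, M d = 2 * dmax d ^ 2 + 7 * dmax d + 10 + K :=
    Nat.exists_eq_add_of_le (by nlinarith)
  have hcount := mul_card_encodings_le (Z := Z) hdmin hpq hp (by lia) (by lia : K + _ ≤ M d)
  have hweight := weight_le (K := K) hD (by lia)
  rw [card_encodings, card_encodings] at hcount
  refine Nat.le_of_mul_le_mul_left ?_ (by nlinarith : 0 < K)
  calc K * (Cset d Z p q).ncard
      ≤ n * (Cset d Z (p - 1) (q - 1)).ncard * (dmax d * (2 * dmax d * K)) :=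
        hcount.trans (by gcongr)
    _ = K * (2 * dmax d ^ 2 * n * (Cset d Z (p - 1) (q - 1)).ncard) := by ring

/-- Phase 1 bound: for `p + q = 4` with `p ∈ {1,2}`,
`|C(p,q)| ≤ 2 d_max² M |C(p−1, q−1)|`. -/
theorem phase1_bound
    (d : Fin n → ℕ) (hgraphical : (Omega d).Nonempty)
    (hdmin : ∀ v, 1 ≤ d v)
    (hdmax3 : 3 ≤ dmax d)
    (hdmaxM : (dmax d : ℝ) ≤ (1 / 3) * Real.sqrt (M d))
    (Z : SimpleGraph (Fin n)) (hZ : Z ∈ Omega d) :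
    ∀ p q : ℕ, p + q = 4 → (p = 1 ∨ p = 2) → (q = 2 ∨ q = 3) →
      (Cset d Z p q).ncard ≤ 2 * dmax d ^ 2 * M d * (Cset d Z (p - 1) (q - 1)).ncard := by
  intro p q hpq _ _
  exact (phase1_bound_general d hdmin hdmaxM Z hpq).trans (by gcongr; exact card_le_M hdmin)

end SwitchChain
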